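/- arXiv:1708.03115 — 6 statements merged into one kernel-verified Lean document; each statement's English description precedes it below -/
import Mathlib

section
/- Let α > 0, β ∈ ℝ, a > 0, ξ > 0 and I + N > 0 be real numbers, and let w(s) = 1/(1 + exp(−α(a·s/(I+N) − β))) − ξ·a·s. Then there exists s ∈ ℝ at which the derivative of w vanishes if and only if ξ ≤ α/(4(I+N)) (Eq. (8) of the paper). -/
/-!
The payoff is `σ (k s - b) - c s` with `σ` the logistic sigmoid, `k = αa/(I+N)`, `b = αβ` and
`c = ξa`. As `s` ranges over `ℝ` so does `k s - b`, hence a critical point exists iff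
`c / k = ξ(I+N)/α` is a value of `σ' = σ(1 - σ)`. Since `σ` takes exactly the values in `(0, 1)`,
the values of `σ'` are those of the parabola `p(1 - p)` on that interval, namely `(0, 1/4]`.
-/

open Real Set

section CriticalPoints

variable {𝕜 : Type*} [NontriviallyNormedField 𝕜] {f : 𝕜 → 𝕜}

theorem deriv_comp_affine_sub_linear {k b s : 𝕜} (hf : DifferentiableAt 𝕜 f (k * s - b)) (c : 𝕜) :
    deriv (fun t ↦ f (k * t - b) - c * t) s = deriv f (k * s - b) * k - c := by
  have affine : HasDerivAt (fun t ↦ k * t - b) k s := by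
    simpa using ((hasDerivAt_id' s).const_mul k).sub_const b
  have linear : HasDerivAt (fun t ↦ c * t) c s := by
    simpa using (hasDerivAt_id' s).const_mul c
  have comp := hf.hasDerivAt.comp s affine
  exact (comp.sub linear).deriv

theorem exists_deriv_comp_affine_sub_linear_eq_zero_iff (hf : Differentiable 𝕜 f) {k : 𝕜}
    (hk : k ≠ 0) (b c : 𝕜) :
    (∃ s, deriv (fun t ↦ f (k * t - b) - c * t) s = 0) ↔ c / k ∈ range (deriv f) := by
  have affine_surjective : Function.Surjective fun s ↦ k * s - b := fun x ↦
    ⟨(x + b) / k, by field_simp; ring⟩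
  rw [← affine_surjective.range_comp]
  simp only [deriv_comp_affine_sub_linear (hf _), sub_eq_zero, mem_range, Function.comp_apply,
    eq_div_iff hk]

end CriticalPoints

theorem image_mul_one_sub_Ioo_zero_one :
    (fun p : ℝ ↦ p * (1 - p)) '' Ioo 0 1 = Ioc 0 (1 / 4) := by
  refine Subset.antisymm ?_ fun y ⟨hy₀, hy⟩ ↦ ?_
  · rintro _ ⟨p, ⟨hp₀, hp₁⟩, rfl⟩
    exact ⟨mul_pos hp₀ (sub_pos.mpr hp₁), by linarith [four_mul_le_sq_add p (1 - p)]⟩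
  · -- The smaller root of `p ^ 2 - p + y`.
    have sq_sqrt_disc : √(1 - 4 * y) ^ 2 = 1 - 4 * y := sq_sqrt (by linarith)
    have sqrt_disc_lt_one : √(1 - 4 * y) < 1 := by rw [sqrt_lt' one_pos]; linarith
    refine ⟨(1 - √(1 - 4 * y)) / 2, ⟨?_, ?_⟩, ?_⟩
    · linarith
    · linarith [sqrt_nonneg (1 - 4 * y)]
    · linear_combination -sq_sqrt_disc / 4

theorem range_deriv_sigmoid : range (deriv sigmoid) = Ioc 0 (1 / 4) := by
  calc range (deriv sigmoid)
      = range ((fun p : ℝ ↦ p * (1 - p)) ∘ sigmoid) := by rw [deriv_sigmoid]; rfl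
    _ = (fun p : ℝ ↦ p * (1 - p)) '' Ioo 0 1 := by rw [range_comp, range_sigmoid]
    _ = Ioc 0 (1 / 4) := image_mul_one_sub_Ioo_zero_one

/-- There exists a power level at which the derivative of the payoff `w`
vanishes iff the price condition `ξ ≤ α/(4(I+N))` (Eq. (8)) holds. -/
theorem exists_critical_point_iff_price_bound
    (α β a ξ I N : ℝ) (hα : 0 < α) (ha : 0 < a) (hξ : 0 < ξ) (hIN : 0 < I + N)
    (w : ℝ → ℝ)
    (hw : w = fun s => 1 / (1 + Real.exp (-(α * (a * s / (I + N) - β)))) - ξ * a * s) :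
    (∃ s : ℝ, deriv w s = 0) ↔ ξ ≤ α / (4 * (I + N)) := by
  have w_eq : w = fun s ↦ sigmoid (α * a / (I + N) * s - α * β) - ξ * a * s := by
    rw [hw]
    funext s
    rw [sigmoid_def, one_div]
    ring_nf
  have slope_pos : 0 < α * a / (I + N) := by positivity
  have ratio_eq : ξ * a / (α * a / (I + N)) = ξ * (I + N) / α := by field_simp
  have ratio_pos : 0 < ξ * (I + N) / α := by positivity
  calc (∃ s, deriv w s = 0)
      ↔ ξ * (I + N) / α ∈ Ioc 0 (1 / 4) := by
        rw [w_eq, exists_deriv_comp_affine_sub_linear_eq_zero_iff differentiable_sigmoid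
          slope_pos.ne', range_deriv_sigmoid, ratio_eq]
    _ ↔ ξ * (I + N) / α ≤ 1 / 4 := and_iff_right ratio_pos
    _ ↔ ξ ≤ α / (4 * (I + N)) := by
        rw [div_le_iff₀ hα, le_div_iff₀ (by positivity)]
        constructor <;> intro h <;> linarith
end

section
/- Let α > 0, β ∈ ℝ, a > 0, ξ > 0 and I + N > 0 be real numbers with 4ξ(I+N) ≤ α, and let w(s) = 1/(1 + exp(−α(a·s/(I+N) − β))) − ξ·a·s. Then the best-reply power s_br = −((I+N)/(α·a))·(log(α/(2ξ(I+N)) − 1 − √((1 − α/(2ξ(I+N)))² − 1)) − α·β) is a critical point of w, i.e., w is differentiable at s_br with derivative 0. -/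
/-!
The logistic function `σ` satisfies `σ'(x) = 1 / (2 (1 + cosh x))`, so `s ↦ σ (k s - b) - p s` is
stationary exactly where `cosh (k s - b) = k / (2 p) - 1`. When the right-hand side is at least `1`,
one solution is `k s - b = arcosh (k / (2 p) - 1)`, and the logarithm in Eq. (17) is this `arcosh`
up to sign, since `(y - √(y² - 1)) (y + √(y² - 1)) = 1`. The payoff is the case `k = α a / (I + N)`,
`b = α β`, `p = ξ a`.
-/

theorem sigmoid_mul_one_sub_sigmoid (x : ℝ) :
    Real.sigmoid x * (1 - Real.sigmoid x) = 1 / (2 * (1 + Real.cosh x)) := by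
  rw [← Real.sigmoid_neg, Real.sigmoid_def, Real.sigmoid_def, neg_neg, ← mul_inv, one_div]
  have exp_mul_exp_neg : Real.exp x * Real.exp (-x) = 1 := by
    rw [← Real.exp_add, add_neg_cancel, Real.exp_zero]
  congr 1
  rw [Real.cosh_eq]
  linear_combination exp_mul_exp_neg

theorem log_sub_sqrt_sq_sub_one {y : ℝ} (hy : 1 ≤ y) :
    Real.log (y - √(y ^ 2 - 1)) = -Real.arcosh y := by
  rw [← Real.add_sqrt_self_sq_sub_one_inv hy, Real.log_inv, Real.arcosh]

theorem hasDerivAt_sigmoid_affine_sub_linear (k b p s : ℝ) :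
    HasDerivAt (fun t => Real.sigmoid (k * t - b) - p * t)
      (k / (2 * (1 + Real.cosh (k * s - b))) - p) s := by
  have affine : HasDerivAt (fun t => k * t - b) k s := by
    simpa using ((hasDerivAt_id s).const_mul k).sub_const b
  have linear : HasDerivAt (fun t => p * t) p s := by
    simpa using (hasDerivAt_id s).const_mul p
  refine (((Real.hasDerivAt_sigmoid _).comp s affine).sub linear).congr_deriv ?_
  rw [sigmoid_mul_one_sub_sigmoid, one_div_mul_eq_div]

theorem hasDerivAt_zero_sigmoid_affine_sub_linear {k p : ℝ} (b : ℝ) (hkp : 2 ≤ k / (2 * p)) :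
    HasDerivAt (fun t => Real.sigmoid (k * t - b) - p * t) 0
      ((Real.arcosh (k / (2 * p) - 1) + b) / k) := by
  have hk : k ≠ 0 := by rintro rfl; norm_num at hkp
  have hp : p ≠ 0 := by rintro rfl; norm_num at hkp
  refine (hasDerivAt_sigmoid_affine_sub_linear k b p _).congr_deriv ?_
  have marginal_utility_eq_price : k / (2 * (k / (2 * p))) = p := by field_simp
  rw [mul_div_cancel₀ _ hk, add_sub_cancel_right, Real.cosh_arcosh (by linarith),
    add_sub_cancel, marginal_utility_eq_price, sub_self]

theorem bestReply_isCriticalPoint_general (α β a ξ P : ℝ) (ha : a ≠ 0)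
    (hcond : 2 ≤ α / (2 * ξ * P)) :
    HasDerivAt (fun s => 1 / (1 + Real.exp (-(α * (a * s / P - β)))) - ξ * a * s) 0
      (-(P / (α * a)) *
        (Real.log (α / (2 * ξ * P) - 1 - √((1 - α / (2 * ξ * P)) ^ 2 - 1)) - α * β)) := by
  have ratio : α * a / P / (2 * (ξ * a)) = α / (2 * ξ * P) := by field_simp
  have critical := hasDerivAt_zero_sigmoid_affine_sub_linear (α * β) (ratio ▸ hcond)
  rw [ratio] at critical
  rw [sub_sq_comm 1, log_sub_sqrt_sq_sub_one (by linarith)]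
  convert critical using 1
  · funext s
    rw [Real.sigmoid_def, one_div]
    ring_nf
  · rw [div_div_eq_mul_div]
    ring

/-- The best-reply power (Eq. (17)) is a critical point of the payoff `w`. -/
theorem bestReply_isCriticalPoint
    (α β a ξ I N : ℝ) (hα : 0 < α) (ha : 0 < a) (hξ : 0 < ξ) (hIN : 0 < I + N)
    (hcond : 4 * ξ * (I + N) ≤ α)
    (w : ℝ → ℝ)
    (hw : w = fun s => 1 / (1 + Real.exp (-(α * (a * s / (I + N) - β)))) - ξ * a * s)
    (sbr : ℝ)
    (hsbr : sbr = -((I + N) / (α * a)) *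
      (Real.log (α / (2 * ξ * (I + N)) - 1 -
          Real.sqrt ((1 - α / (2 * ξ * (I + N))) ^ 2 - 1)) - α * β)) :
    HasDerivAt w 0 sbr := by
  rw [hw, hsbr]
  exact bestReply_isCriticalPoint_general α β a ξ (I + N) ha.ne'
    ((le_div_iff₀ (by positivity)).2 (by linarith))
end

section
/- Let α > 0, β > 0, a > 0, ξ > 0 and I + N > 0 be real numbers with 4ξ(I+N) ≤ α. Then the best-reply power s_br = −((I+N)/(α·a))·(log(α/(2ξ(I+N)) − 1 − √((1 − α/(2ξ(I+N)))² − 1)) − α·β) satisfies s_br ≥ β(I+N)/a > 0; in particular the best reply is strictly positive. -/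
theorem bestReply_eq_add_arcosh {α x : ℝ} (β a p : ℝ) (hα : α ≠ 0) (hx : 1 ≤ x - 1) :
    -(p / (α * a)) * (Real.log (x - 1 - √((1 - x) ^ 2 - 1)) - α * β) =
      β * p / a + p / (α * a) * Real.arcosh (x - 1) := by
  rw [sub_sq_comm, log_sub_sqrt_sq_sub_one hx]
  field_simp
  ring

/-- The best-reply power (Eq. (17)) is at least `β(I+N)/a`, which is
strictly positive; in particular the best reply is strictly positive. -/
theorem bestReply_pos
    (α β a ξ I N : ℝ) (hα : 0 < α) (hβ : 0 < β) (ha : 0 < a) (hξ : 0 < ξ)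
    (hIN : 0 < I + N) (hcond : 4 * ξ * (I + N) ≤ α)
    (sbr : ℝ)
    (hsbr : sbr = -((I + N) / (α * a)) *
      (Real.log (α / (2 * ξ * (I + N)) - 1 -
          Real.sqrt ((1 - α / (2 * ξ * (I + N))) ^ 2 - 1)) - α * β)) :
    β * (I + N) / a ≤ sbr ∧ 0 < β * (I + N) / a := by
  have one_le_sub_one : 1 ≤ α / (2 * ξ * (I + N)) - 1 := by
    rw [le_sub_iff_add_le, le_div_iff₀ (by positivity)]
    linarith
  have arcosh_nonneg := Real.arcosh_nonneg one_le_sub_one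
  refine ⟨?_, by positivity⟩
  rw [hsbr, bestReply_eq_add_arcosh β a (I + N) hα.ne' one_le_sub_one]
  exact le_add_of_nonneg_right (by positivity)
end

section
/- Let α > 0, β ∈ ℝ, a > 0, ξ > 0 and I + N > 0 be real numbers with 4ξ(I+N) < α, and let w(s) = 1/(1 + exp(−α(a·s/(I+N) − β))) − ξ·a·s. Then s_br = −((I+N)/(α·a))·(log(α/(2ξ(I+N)) − 1 − √((1 − α/(2ξ(I+N)))² − 1)) − α·β) is a local maximum point of w. -/
/-!
In the variable `x = α (a s / (I + N) - β)` the payoff is, up to an additive constant,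
`sigmoid x - c x` with slope `c = ξ (I + N) / α < 1 / 4`. The derivative `1 / (2 (1 + cosh x))` of
the sigmoid decreases in `|x|`, so the critical points are `± arcosh k`, where
`k = 1 / (2 c) - 1 > 1`, and the positive one maximizes over everything to the right of the negative
one. Since `arcosh k = -log (k - √(k ^ 2 - 1))`, it corresponds to the best-reply power.
-/

open Real Set

theorem hasDerivAt_sigmoid_cosh (x : ℝ) : HasDerivAt sigmoid (2 * (1 + cosh x))⁻¹ x := by
  refine (hasDerivAt_sigmoid x).congr_deriv ?_
  rw [← sigmoid_neg, sigmoid_def, sigmoid_def, neg_neg, ← mul_inv, cosh_eq]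
  have hexp : exp (-x) * exp x = 1 := by rw [← exp_add, neg_add_cancel, exp_zero]
  congr 1
  linear_combination hexp

theorem isMaxOn_Ioi_sigmoid_sub_mul {x : ℝ} (hx : 0 ≤ x) :
    IsMaxOn (fun y ↦ sigmoid y - (2 * (1 + cosh x))⁻¹ * y) (Ioi (-x)) x := by
  have hderiv (y : ℝ) : HasDerivAt (fun y ↦ sigmoid y - (2 * (1 + cosh x))⁻¹ * y)
      ((2 * (1 + cosh y))⁻¹ - (2 * (1 + cosh x))⁻¹) y :=
    (hasDerivAt_sigmoid_cosh y).sub (hasDerivAt_const_mul _)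
  have hdiff : Differentiable ℝ (fun y ↦ sigmoid y - (2 * (1 + cosh x))⁻¹ * y) :=
    fun y ↦ (hderiv y).differentiableAt
  refine isMaxOn_Ioi_of_deriv (hderiv x).continuousAt hdiff.differentiableOn
    hdiff.differentiableOn (fun y hy ↦ ?_) (fun y hy ↦ ?_)
  · have hcosh : cosh y ≤ cosh x := cosh_le_cosh.2 (abs_le_abs hy.2.le (neg_le.1 hy.1.le))
    rw [(hderiv y).deriv, sub_nonneg]
    gcongr
  · have hcosh : cosh x ≤ cosh y := cosh_le_cosh.2 (abs_le_abs_of_nonneg hx (mem_Ioi.1 hy).le)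
    rw [(hderiv y).deriv, sub_nonpos]
    gcongr

theorem isLocalMax_sigmoid_sub_mul_arcosh {k : ℝ} (hk : 1 < k) :
    IsLocalMax (fun y ↦ sigmoid y - (2 * (1 + k))⁻¹ * y) (arcosh k) := by
  have hpos : 0 < arcosh k := arcosh_pos hk
  have hmax := isMaxOn_Ioi_sigmoid_sub_mul hpos.le
  rw [cosh_arcosh hk.le] at hmax
  exact hmax.isLocalMax (Ioi_mem_nhds (neg_lt_self hpos))

theorem arcosh_eq_neg_log_sub_sqrt {k : ℝ} (hk : 1 ≤ k) :
    arcosh k = -log (k - √(k ^ 2 - 1)) := by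
  rw [← add_sqrt_self_sq_sub_one_inv hk, log_inv, neg_neg, arcosh]

/-- The best-reply power (Eq. (17)) is a local maximum point of the payoff `w`. -/
theorem bestReply_isLocalMax
    (α β a ξ I N : ℝ) (hα : 0 < α) (ha : 0 < a) (hξ : 0 < ξ) (hIN : 0 < I + N)
    (hcond : 4 * ξ * (I + N) < α)
    (w : ℝ → ℝ)
    (hw : w = fun s => 1 / (1 + Real.exp (-(α * (a * s / (I + N) - β)))) - ξ * a * s)
    (sbr : ℝ)
    (hsbr : sbr = -((I + N) / (α * a)) *
      (Real.log (α / (2 * ξ * (I + N)) - 1 -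
          Real.sqrt ((1 - α / (2 * ξ * (I + N))) ^ 2 - 1)) - α * β)) :
    IsLocalMax w sbr := by
  set k : ℝ := α / (2 * ξ * (I + N)) - 1 with hk_def
  let x : ℝ → ℝ := fun s ↦ α * (a * s / (I + N) - β)
  have hk : 1 < k := by
    rw [lt_sub_iff_add_lt, lt_div_iff₀ (by positivity)]
    linarith
  have hslope : (2 * (1 + k))⁻¹ = ξ * (I + N) / α := by
    rw [hk_def, add_sub_cancel]
    field
  have hx_sbr : x sbr = arcosh k := by
    rw [arcosh_eq_neg_log_sub_sqrt hk.le]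
    simp only [x, hsbr, sub_sq_comm (1 : ℝ), ← hk_def]
    field
  have hw_x : w = fun s ↦ (sigmoid (x s) - (2 * (1 + k))⁻¹ * x s) - ξ * (I + N) * β := by
    funext s
    simp only [hw, hslope, sigmoid_def, x]
    field
  have hmax : IsLocalMax (fun y ↦ sigmoid y - (2 * (1 + k))⁻¹ * y) (x sbr) :=
    hx_sbr ▸ isLocalMax_sigmoid_sub_mul_arcosh hk
  rw [hw_x]
  exact (hmax.comp_continuous (by fun_prop)).sub isLocalMin_const
end

section
/- Let α > 0, β ∈ ℝ, a > 0, ξ > 0 and I + N > 0 be real numbers with 4ξ(I+N) < α, and let w(s) = 1/(1 + exp(−α(a·s/(I+N) − β))) − ξ·a·s. Then w is strictly decreasing (strictly antitone) on the half-line [s_br, ∞), where s_br = −((I+N)/(α·a))·(log(α/(2ξ(I+N)) − 1 − √((1 − α/(2ξ(I+N)))² − 1)) − α·β). -/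
/-!
In the variable `u = α * (a * s / (I + N) - β)` the payoff is, up to an additive constant,
`sigmoid u - m * u` with `m = ξ * (I + N) / α`. Since `sigmoid' u = 1 / (2 * (1 + cosh u))`, it
decreases strictly once `u ≥ 0` and `cosh u > 1 / (2 * m) - 1`. The best reply solves
`cosh u = 1 / (2 * m) - 1` for `u ≥ 0`: its logarithm is `-arcosh (1 / (2 * m) - 1)`.
-/

open Real Set

theorem sigmoid_mul_one_sub_sigmoid_s7 (x : ℝ) :
    sigmoid x * (1 - sigmoid x) = (2 * (1 + cosh x))⁻¹ := by
  have hexp : exp x * exp (-x) = 1 := by rw [← exp_add, add_neg_cancel, exp_zero]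
  have hfactor : (1 + exp (-x)) * (1 + exp x) = 2 * (1 + cosh x) := by
    rw [cosh_eq]
    linear_combination hexp
  rw [← sigmoid_neg, sigmoid_def, sigmoid_def, neg_neg, ← mul_inv, hfactor]

theorem strictAntiOn_sigmoid_sub_mul {b m : ℝ} (hb : 0 ≤ b) (hm : (2 * (1 + cosh b))⁻¹ ≤ m) :
    StrictAntiOn (fun x ↦ sigmoid x - m * x) (Ici b) := by
  have hderiv (x : ℝ) :
      HasDerivAt (fun x ↦ sigmoid x - m * x) ((2 * (1 + cosh x))⁻¹ - m) x := by
    rw [← sigmoid_mul_one_sub_sigmoid_s7]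
    exact (hasDerivAt_sigmoid x).sub (hasDerivAt_const_mul m)
  refine strictAntiOn_of_hasDerivWithinAt_neg (convex_Ici b)
    (fun x _ ↦ (hderiv x).continuousAt.continuousWithinAt)
    (fun x _ ↦ (hderiv x).hasDerivWithinAt) fun x hx ↦ ?_
  rw [interior_Ici, mem_Ioi] at hx
  have hcosh : cosh b < cosh x := cosh_strictMonoOn hb (hb.trans hx.le) hx
  have hslope : (2 * (1 + cosh x))⁻¹ < (2 * (1 + cosh b))⁻¹ := by gcongr
  exact sub_neg.mpr (hslope.trans_le hm)

theorem log_sub_sqrt_sq_sub_one_s7 {x : ℝ} (hx : 1 ≤ x) :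
    log (x - √(x ^ 2 - 1)) = -arcosh x := by
  rw [← add_sqrt_self_sq_sub_one_inv hx, log_inv, arcosh]

/-- The payoff `w` is strictly decreasing on the half-line `[s_br, ∞)`. -/
theorem payoff_strictAntiOn_Ici_bestReply
    (α β a ξ I N : ℝ) (hα : 0 < α) (ha : 0 < a) (hξ : 0 < ξ) (hIN : 0 < I + N)
    (hcond : 4 * ξ * (I + N) < α)
    (w : ℝ → ℝ)
    (hw : w = fun s => 1 / (1 + Real.exp (-(α * (a * s / (I + N) - β)))) - ξ * a * s)
    (sbr : ℝ)
    (hsbr : sbr = -((I + N) / (α * a)) *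
      (Real.log (α / (2 * ξ * (I + N)) - 1 -
          Real.sqrt ((1 - α / (2 * ξ * (I + N))) ^ 2 - 1)) - α * β)) :
    StrictAntiOn w (Set.Ici sbr) := by
  let u : ℝ → ℝ := fun s ↦ α * (a * s / (I + N) - β)
  have hu : StrictMono u := fun s t hst ↦ by dsimp only [u]; gcongr
  have hp : 1 ≤ α / (2 * ξ * (I + N)) - 1 := by
    rw [le_sub_iff_add_le, le_div_iff₀ (by positivity)]
    linarith
  have husbr : u sbr = arcosh (α / (2 * ξ * (I + N)) - 1) := by
    rw [sub_sq_comm, log_sub_sqrt_sq_sub_one_s7 hp] at hsbr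
    simp only [u, hsbr]
    field_simp
    ring
  have hslope : (2 * (1 + cosh (u sbr)))⁻¹ ≤ ξ * (I + N) / α := by
    rw [husbr, cosh_arcosh hp, add_sub_cancel]
    exact le_of_eq (by field_simp)
  have hanti := strictAntiOn_sigmoid_sub_mul (husbr ▸ arcosh_nonneg hp) hslope
  have hw_eq (s : ℝ) : w s = sigmoid (u s) - ξ * (I + N) / α * u s - ξ * (I + N) * β := by
    simp only [hw, u, sigmoid_def, one_div]
    field_simp
    ring
  intro s hs t ht hst
  rw [hw_eq, hw_eq]
  exact sub_lt_sub_right (hanti (hu.monotone hs) (hu.monotone ht) (hu hst)) _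
end

section
/- Let α > 0, a > 0 and β ∈ ℝ be real numbers, and define D(t) = β/a − 1/(a·√(α(α − 4t))) − (1/(α·a))·log(α/(2t) − 1 − √((α/(2t) − 1)² − 1)) for t ∈ (0, α/4). Then D(t) → −∞ as t → α/4 from the left (Tendsto along nhdsWithin (α/4) (−∞, α/4) to atBot). -/
/-!
As `t → (α / 4)⁻` the radicand `α (α - 4 t)` decreases to `0⁺`, so the reciprocal square root
diverges to `+∞`. The logarithmic term stays bounded: `α / (2 t) - 1` tends to `1`, and
`u ↦ log (u - √(u ^ 2 - 1))` is continuous away from `u = 0`.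
-/

open Filter

open scoped Topology

theorem tendsto_one_div_mul_sqrt_nhdsGT_zero {a : ℝ} (ha : 0 < a) :
    Tendsto (fun x => 1 / (a * √x)) (𝓝[>] 0) atTop := by
  have h_sqrt : Tendsto (fun x => a * √x) (𝓝[>] 0) (𝓝[>] 0) := by
    have h_cont : ContinuousWithinAt (fun x => a * √x) (Set.Ioi 0) 0 := by fun_prop
    simpa using h_cont.tendsto_nhdsWithin (t := Set.Ioi (a * √0)) fun x hx => by
      simpa using mul_pos ha (Real.sqrt_pos.2 hx)
  simpa only [one_div] using! h_sqrt.inv_tendsto_nhdsGT_zero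

theorem tendsto_mul_sub_mul_nhdsLT_div {k c : ℝ} (hk : 0 < k) (hc : 0 < c) (b : ℝ) :
    Tendsto (fun t => k * (b - c * t)) (𝓝[<] (b / c)) (𝓝[>] 0) := by
  have h_cont : ContinuousWithinAt (fun t => k * (b - c * t)) (Set.Iio (b / c)) (b / c) := by
    fun_prop
  have h_zero : k * (b - c * (b / c)) = 0 := by rw [mul_div_cancel₀ b hc.ne', sub_self, mul_zero]
  have h_pos : Set.MapsTo (fun t => k * (b - c * t)) (Set.Iio (b / c)) (Set.Ioi 0) := fun t ht =>
    mul_pos hk (sub_pos.2 ((lt_div_iff₀' hc).1 ht))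
  simpa only [h_zero] using h_cont.tendsto_nhdsWithin h_pos

theorem sub_sqrt_sq_sub_ne_zero {u c : ℝ} (hu : u ≠ 0) (hc : c ≠ 0) : u - √(u ^ 2 - c) ≠ 0 := by
  intro h
  have h_sqrt : √(u ^ 2 - c) = u := (sub_eq_zero.1 h).symm
  have h_pos : 0 < √(u ^ 2 - c) := (Real.sqrt_nonneg _).lt_of_ne' (h_sqrt.trans_ne hu)
  have h_sq : √(u ^ 2 - c) ^ 2 = u ^ 2 - c := Real.sq_sqrt (Real.sqrt_pos.1 h_pos).le
  rw [h_sqrt] at h_sq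
  exact hc (by linarith)

theorem continuousAt_log_sub_sqrt_sq_sub {u c : ℝ} (hu : u ≠ 0) (hc : c ≠ 0) :
    ContinuousAt (fun v => Real.log (v - √(v ^ 2 - c))) u :=
  ContinuousAt.log (by fun_prop) (sub_sqrt_sq_sub_ne_zero hu hc)

/-- The derivative of the best-reply power with respect to interference
(Eq. (19)), as a function of `t = ξ(I+N)`, tends to `−∞` as `t → (α/4)⁻`. -/
theorem bestReply_deriv_tendsto_atBot_at_quarter
    (α a β : ℝ) (hα : 0 < α) (ha : 0 < a)
    (D : ℝ → ℝ)
    (hD : D = fun t => β / a - 1 / (a * Real.sqrt (α * (α - 4 * t))) -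
      (1 / (α * a)) *
        Real.log (α / (2 * t) - 1 - Real.sqrt ((α / (2 * t) - 1) ^ 2 - 1))) :
    Tendsto D (nhdsWithin (α / 4) (Set.Iio (α / 4))) atBot := by
  have h_pole : Tendsto (fun t => 1 / (a * √(α * (α - 4 * t)))) (𝓝[<] (α / 4)) atTop :=
    (tendsto_one_div_mul_sqrt_nhdsGT_zero ha).comp (tendsto_mul_sub_mul_nhdsLT_div hα four_pos α)
  have h_one : α / (2 * (α / 4)) - 1 = 1 := by field_simp; norm_num
  have h_arg : ContinuousAt (fun t => α / (2 * t) - 1) (α / 4) := by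
    fun_prop (disch := positivity)
  have h_log : ContinuousAt
      (fun t => Real.log (α / (2 * t) - 1 - √((α / (2 * t) - 1) ^ 2 - 1))) (α / 4) :=
    ContinuousAt.comp (f := fun t => α / (2 * t) - 1)
      (continuousAt_log_sub_sqrt_sq_sub (h_one.trans_ne one_ne_zero) one_ne_zero) h_arg
  have h_rest : ContinuousAt (fun t => β / a - 1 / (α * a) *
      Real.log (α / (2 * t) - 1 - √((α / (2 * t) - 1) ^ 2 - 1))) (α / 4) :=
    continuousAt_const.sub (h_log.const_mul _)
  rw [hD]
  refine ((tendsto_neg_atTop_atBot.comp h_pole).atBot_add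
    h_rest.continuousWithinAt.tendsto).congr fun t => ?_
  simp only [Function.comp_apply]
  ring
end
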